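/- The characteristic solution w of the Burgers equation with initial data w_σ is infinitely differentiable on [0,∞) × ℝ, and for all integers α₀, α₁ ≥ 0 with k := α₀ + α₁ ≥ 2 and every p ∈ [1,∞] there is a constant C > 0 depending only on k, p and on w₋, w₊ (in particular independent of σ and t) such that for all σ > 0 and all t ≥ 0 one has ‖∂ₜ^{α₀}∂ₓ^{α₁} w(t,·)‖_{L^p(ℝ)} ≤ C (σ + t)^{−1} σ^{−k + 1 + 1/p}. -/

import Mathlib

open Set MeasureTheory
open scoped ENNReal

/-- The smoothed Riemann data `w_σ`. -/
noncomputable def smoothedRiemannData (wm wp σ x : ℝ) : ℝ :=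
  (wp + wm) / 2 + (wp - wm) / 2 * Real.tanh (x / σ)

/-!
If the data `f` satisfies `f' = g(f)`, then the solution satisfies `∂ₓw = g(w) R`, where
`R = (1 + t g(w))⁻¹` is the inverse Jacobian of the characteristic flow, so every derivative of `w`
is a polynomial in `w` and `R`. As `w` is constant along the flow, all derivatives of order at
least two lie in the ideal generated by `g(w) R³` and `g(w)² R²`. On this ideal a factor
`(1 + t)⁻¹` is gained: in sup norm because `g(w) R ≲ (1 + t)⁻¹`, and in `L¹` because concavity of
`g` bounds both generators by `(1 + t)⁻¹` times the `x`-derivative of the bounded monotone function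
`w + (w - c) R`, where `c` is a maximiser of `g`. For the smoothed Riemann data `g` is the concave
parabola vanishing at `w₋` and `w₊`. Scaling reduces the estimate to `σ = 1`, and interpolation
between `L¹` and `L^∞` gives every `L^p`.
-/

namespace Burgers

open MvPolynomial

/-! ### Derivations, polynomials and norms -/

theorem derivation_mem_span {R A : Type*} [CommSemiring R] [CommSemiring A] [Algebra R A]
    (D : Derivation R A A) {s : Set A} (hs : ∀ a ∈ s, D a ∈ Ideal.span s) {p : A}
    (hp : p ∈ Ideal.span s) : D p ∈ Ideal.span s := by
  induction hp using Submodule.span_induction with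
  | mem a ha => exact hs a ha
  | zero => simp
  | add p q _ _ hp hq => simpa using add_mem hp hq
  | smul q p hp ihp =>
    rw [smul_eq_mul, D.leibniz, smul_eq_mul, smul_eq_mul]
    exact add_mem (Ideal.mul_mem_left _ q ihp) (Ideal.mul_mem_right _ _ hp)

theorem iterate_smul_derivation {R A : Type*} [CommSemiring R] [CommSemiring A] [Algebra R A]
    (D : Derivation R A A) (c b : R) (a : A) (n : ℕ) :
    (c • D)^[n] (b • a) = (c ^ n * b) • D^[n] a := by
  induction n with
  | zero => simp
  | succ n ih =>
    rw [Function.iterate_succ_apply', ih, Function.iterate_succ_apply', Derivation.smul_apply,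
      D.map_smul, smul_smul]
    ring_nf

theorem exists_abs_eval_le_of_mem_span_pair {ι : Type*} {S : Set (ι → ℝ)} (hS : IsCompact S)
    {a b p : MvPolynomial ι ℝ} (hp : p ∈ Ideal.span {a, b}) :
    ∃ K : ℝ, ∀ z ∈ S, |eval z p| ≤ K * (|eval z a| + |eval z b|) := by
  obtain ⟨u, v, rfl⟩ := Ideal.mem_span_pair.1 hp
  obtain ⟨Ku, hu⟩ := hS.exists_bound_of_continuousOn (continuous_eval u).continuousOn
  obtain ⟨Kv, hv⟩ := hS.exists_bound_of_continuousOn (continuous_eval v).continuousOn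
  refine ⟨max Ku Kv, fun z hz => ?_⟩
  calc |eval z (u * a + v * b)| ≤ |eval z u| * |eval z a| + |eval z v| * |eval z b| := by
        simpa only [map_add, map_mul, abs_mul] using abs_add_le (eval z (u * a)) (eval z (v * b))
    _ ≤ max Ku Kv * |eval z a| + max Ku Kv * |eval z b| := by
        gcongr
        · exact (hu z hz).trans (le_max_left _ _)
        · exact (hv z hz).trans (le_max_right _ _)
    _ = max Ku Kv * (|eval z a| + |eval z b|) := by ring

theorem hasDerivWithinAt_eval {ι : Type*}
    (D : Derivation ℝ (MvPolynomial ι ℝ) (MvPolynomial ι ℝ)) {γ : ℝ → ι → ℝ} {S : Set ℝ} {t : ℝ}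
    (hγ : ∀ i, HasDerivWithinAt (fun s => γ s i) (eval (γ t) (D (X i))) S t)
    (p : MvPolynomial ι ℝ) :
    HasDerivWithinAt (fun s => eval (γ s) p) (eval (γ t) (D p)) S t := by
  induction p using MvPolynomial.induction_on with
  | C r =>
    have hC : D (C r) = 0 := D.map_algebraMap r
    simpa [hC] using hasDerivWithinAt_const t S r
  | add p q hp hq => simpa only [map_add] using hp.fun_add hq
  | mul_X p i hp =>
    simp only [map_mul, eval_X, Derivation.leibniz, smul_eq_mul, map_add]
    exact (hp.fun_mul (hγ i)).congr_deriv (by ring)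

theorem iteratedDerivWithin_eval {ι : Type*}
    (D : Derivation ℝ (MvPolynomial ι ℝ) (MvPolynomial ι ℝ)) {γ : ℝ → ι → ℝ} {S : Set ℝ}
    (hS : UniqueDiffOn ℝ S)
    (hγ : ∀ t ∈ S, ∀ i, HasDerivWithinAt (fun s => γ s i) (eval (γ t) (D (X i))) S t)
    (p : MvPolynomial ι ℝ) (n : ℕ) :
    EqOn (iteratedDerivWithin n (fun s => eval (γ s) p) S) (fun t => eval (γ t) (D^[n] p)) S := by
  induction n with
  | zero => simp [EqOn]
  | succ n ih =>
    intro t ht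
    rw [iteratedDerivWithin_succ, derivWithin_congr ih (ih ht), Function.iterate_succ_apply']
    exact (hasDerivWithinAt_eval D (hγ t ht) _).derivWithin (hS t ht)

theorem lintegral_deriv_le_of_mem_Icc {H H' : ℝ → ℝ} {l u : ℝ}
    (hd : ∀ x, HasDerivAt H (H' x) x) (hpos : ∀ x, 0 ≤ H' x) (hmem : ∀ x, H x ∈ Icc l u) :
    ∫⁻ x, ENNReal.ofReal (H' x) ≤ ENNReal.ofReal (u - l) := by
  have hmono : Monotone H := monotone_of_hasDerivAt_nonneg hd hpos
  calc ∫⁻ x, ENNReal.ofReal (H' x) = volume (H '' univ) := by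
        simpa using lintegral_deriv_eq_volume_image_of_monotoneOn MeasurableSet.univ
          (fun x _ => (hd x).hasDerivWithinAt) (hmono.monotoneOn univ)
    _ ≤ volume (Icc l u) := measure_mono (image_subset_iff.2 fun x _ => hmem x)
    _ = ENNReal.ofReal (u - l) := Real.volume_Icc

theorem eLpNorm_le_mul_rpow_of_lintegral_le {α E : Type*} [MeasurableSpace α] {μ : Measure α}
    [NormedAddCommGroup E] {f : α → E} {A B p : ℝ≥0∞} (hp : 1 ≤ p) (hA : A ≠ ∞)
    (hsup : ∀ᵐ x ∂μ, ‖f x‖ₑ ≤ A) (hint : ∫⁻ x, ‖f x‖ₑ ∂μ ≤ A * B) :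
    eLpNorm f p μ ≤ A * B ^ (1 / p).toReal := by
  rcases eq_or_ne p ∞ with rfl | hp_top
  · simpa using eLpNormEssSup_le_of_ae_enorm_bound hsup
  set r := p.toReal
  have hr : 1 ≤ r := by simpa using ENNReal.toReal_mono hp_top hp
  have hr0 : 0 < r := by linarith
  have hsplit (a : ℝ≥0∞) : a ^ r = a ^ (r - 1) * a := by
    simpa using ENNReal.rpow_add_of_nonneg (x := a) (r - 1) 1 (by linarith) zero_le_one
  have hpow : ∫⁻ x, ‖f x‖ₑ ^ r ∂μ ≤ A ^ r * B :=
    calc ∫⁻ x, ‖f x‖ₑ ^ r ∂μ ≤ ∫⁻ x, A ^ (r - 1) * ‖f x‖ₑ ∂μ := by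
          refine lintegral_mono_ae (hsup.mono fun x hx => ?_)
          rw [hsplit]
          gcongr
      _ = A ^ (r - 1) * ∫⁻ x, ‖f x‖ₑ ∂μ :=
          lintegral_const_mul' _ _ (ENNReal.rpow_ne_top_of_nonneg (by linarith) hA)
      _ ≤ A ^ (r - 1) * (A * B) := by gcongr
      _ = A ^ r * B := by rw [hsplit A, mul_assoc]
  calc eLpNorm f p μ = (∫⁻ x, ‖f x‖ₑ ^ r ∂μ) ^ (1 / r) :=
        eLpNorm_eq_lintegral_rpow_enorm_toReal (one_pos.trans_le hp).ne' hp_top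
    _ ≤ (A ^ r * B) ^ (1 / r) := by gcongr
    _ = A * B ^ (1 / p).toReal := by
        rw [ENNReal.mul_rpow_of_nonneg _ _ (by positivity), ← ENNReal.rpow_mul,
          mul_one_div_cancel hr0.ne', ENNReal.rpow_one]
        simp [r]

theorem eLpNorm_le_of_abs_le_mul_min {α : Type*} [MeasurableSpace α] {μ : Measure α}
    {u ρ : α → ℝ} {N L V : ℝ} {p : ℝ≥0∞} (hp : 1 ≤ p) (hN : 0 ≤ N) (hL : 0 ≤ L) (hV : 0 ≤ V)
    (hu : ∀ x, |u x| ≤ N * min 1 (L * ρ x))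
    (hρ : ∫⁻ x, ENNReal.ofReal (ρ x) ∂μ ≤ ENNReal.ofReal V) :
    eLpNorm u p μ ≤ ENNReal.ofReal (N * (L * V) ^ (1 / p).toReal) := by
  have hsup (x : α) : ‖u x‖ₑ ≤ ENNReal.ofReal N := by
    rw [Real.enorm_eq_ofReal_abs]
    exact ENNReal.ofReal_le_ofReal
      ((hu x).trans (mul_le_of_le_one_right hN (min_le_left _ _)))
  have hint : ∫⁻ x, ‖u x‖ₑ ∂μ ≤ ENNReal.ofReal N * ENNReal.ofReal (L * V) :=
    calc ∫⁻ x, ‖u x‖ₑ ∂μ ≤ ∫⁻ x, ENNReal.ofReal (N * L) * ENNReal.ofReal (ρ x) ∂μ := by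
          refine lintegral_mono fun x => ?_
          rw [Real.enorm_eq_ofReal_abs, ← ENNReal.ofReal_mul (by positivity), mul_assoc]
          gcongr
          exact (hu x).trans (by gcongr; exact min_le_right _ _)
      _ = ENNReal.ofReal (N * L) * ∫⁻ x, ENNReal.ofReal (ρ x) ∂μ :=
          lintegral_const_mul' _ _ ENNReal.ofReal_ne_top
      _ ≤ ENNReal.ofReal (N * L) * ENNReal.ofReal V := by gcongr
      _ = ENNReal.ofReal N * ENNReal.ofReal (L * V) := by
          rw [ENNReal.ofReal_mul hN, ENNReal.ofReal_mul hL, mul_assoc]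
  refine (eLpNorm_le_mul_rpow_of_lintegral_le hp ENNReal.ofReal_ne_top (.of_forall hsup)
    hint).trans_eq ?_
  rw [ENNReal.ofReal_rpow_of_nonneg (by positivity) ENNReal.toReal_nonneg, ← ENNReal.ofReal_mul hN]

theorem mul_inv_pow_mul_mul_rpow_le {σ V r : ℝ} (hσ : 0 < σ) (hV : 0 ≤ V) (hr : 0 ≤ r)
    (hr_le : r ≤ 1) (k : ℕ) :
    σ * σ⁻¹ ^ k * (σ * V) ^ r ≤ (1 + V) * σ ^ (-(k : ℝ) + 1 + r) := by
  have hVr : V ^ r ≤ 1 + V :=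
    calc V ^ r ≤ (1 + V) ^ r := by gcongr; linarith
      _ ≤ (1 + V) ^ (1 : ℝ) := by gcongr; linarith
      _ = 1 + V := Real.rpow_one _
  have hpow : σ * σ⁻¹ ^ k * σ ^ r = σ ^ (-(k : ℝ) + 1 + r) := by
    rw [Real.rpow_add hσ, Real.rpow_add hσ, Real.rpow_neg hσ.le, Real.rpow_natCast, Real.rpow_one,
      inv_pow, mul_comm σ]
  calc σ * σ⁻¹ ^ k * (σ * V) ^ r = σ * σ⁻¹ ^ k * σ ^ r * V ^ r := by
        rw [Real.mul_rpow hσ.le hV, mul_assoc, mul_assoc, mul_assoc]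
    _ ≤ σ ^ (-(k : ℝ) + 1 + r) * (1 + V) := by rw [hpow]; gcongr
    _ = _ := mul_comm _ _

theorem contDiff_of_hasDerivAt_polynomial {F : ℝ → ℝ} {g : Polynomial ℝ}
    (hF : ∀ x, HasDerivAt F (g.eval (F x)) x) : ContDiff ℝ (⊤ : ℕ∞) F := by
  refine contDiff_infty.2 fun n => ?_
  induction n with
  | zero => exact contDiff_zero.2 (continuous_iff_continuousAt.2 fun x => (hF x).continuousAt)
  | succ n ih =>
    push_cast
    refine contDiff_succ_iff_deriv.2 ⟨fun x => (hF x).differentiableAt, by simp, ?_⟩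
    rw [funext fun x => (hF x).deriv]
    have hcomp := (g.contDiff_aeval n).comp ih
    simpa only [Polynomial.coe_aeval_eq_eval, Function.comp_def] using hcomp

theorem le_add_mul_of_concaveOn {S : Set ℝ} {f : ℝ → ℝ} {f' x y : ℝ} (hf : ConcaveOn ℝ S f)
    (hx : x ∈ S) (hy : y ∈ S) (hd : HasDerivAt f f' x) : f y ≤ f x + f' * (y - x) := by
  rcases lt_trichotomy x y with h | rfl | h
  · have := hf.slope_le_of_hasDerivAt hx hy h hd
    rw [slope_def_field, div_le_iff₀ (sub_pos.2 h)] at this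
    linarith
  · simp
  · have := hf.le_slope_of_hasDerivAt hy hx h hd
    rw [slope_def_field, le_div_iff₀ (sub_pos.2 h)] at this
    linarith

/-! ### Smoothness of characteristic solutions -/

/-- `w` solves the Burgers equation with data `f` by characteristics: `w` is constant, equal to
`f y`, along the line `t ↦ y + t * f y`. Nothing is said about negative times. -/
def IsCharacteristicSolution (f : ℝ → ℝ) (w : ℝ → ℝ → ℝ) : Prop :=
  ∀ t, 0 ≤ t → ∀ y, w t (y + t * f y) = f y

theorem exists_add_mul_eq {f : ℝ → ℝ} (hf : Continuous f) (hmono : Monotone f) {t : ℝ}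
    (ht : 0 ≤ t) (x : ℝ) : ∃ y, y + t * f y = x := by
  refine mem_range_of_exists_le_of_exists_ge (by fun_prop)
    ⟨min 0 (x - t * f 0), ?_⟩ ⟨max 0 (x - t * f 0), ?_⟩
  · have := mul_le_mul_of_nonneg_left (hmono (min_le_left 0 (x - t * f 0))) ht
    linarith [min_le_right 0 (x - t * f 0)]
  · have := mul_le_mul_of_nonneg_left (hmono (le_max_left 0 (x - t * f 0))) ht
    linarith [le_max_right 0 (x - t * f 0)]

theorem one_add_mul_deriv_pos {f : ℝ → ℝ} (hmono : Monotone f) {t : ℝ} (ht : 0 ≤ t) (y : ℝ) :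
    0 < 1 + t * deriv f y := by
  have := mul_nonneg ht (hmono.deriv_nonneg (x := y))
  linarith

theorem exists_hasFDerivAt_characteristicMap_equiv {f : ℝ → ℝ} (hf : Differentiable ℝ f)
    (hmono : Monotone f) {t : ℝ} (ht : 0 ≤ t) (y : ℝ) : ∃ E : (ℝ × ℝ) ≃L[ℝ] ℝ × ℝ,
      HasFDerivAt (fun q : ℝ × ℝ => (q.1, q.2 + q.1 * f q.2)) (E : ℝ × ℝ →L[ℝ] ℝ × ℝ) (t, y) := by
  refine ⟨(ContinuousLinearEquiv.refl ℝ ℝ).skewProd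
    (ContinuousLinearEquiv.unitsEquivAut ℝ (Units.mk0 _ (one_add_mul_deriv_pos hmono ht y).ne'))
    (ContinuousLinearMap.toSpanSingleton ℝ (f y)), ?_⟩
  have hfst : HasFDerivAt Prod.fst (ContinuousLinearMap.fst ℝ ℝ ℝ) (t, y) := hasFDerivAt_fst
  have hsnd : HasFDerivAt Prod.snd (ContinuousLinearMap.snd ℝ ℝ ℝ) (t, y) := hasFDerivAt_snd
  have hfsnd := (hf y).hasDerivAt.comp_hasFDerivAt (t, y) hsnd
  refine (hfst.prodMk (hsnd.add (hfst.mul hfsnd))).congr_fderiv ?_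
  ext <;> simp

namespace IsCharacteristicSolution

variable {f : ℝ → ℝ} {w : ℝ → ℝ → ℝ} {t : ℝ}

theorem mem_range (hw : IsCharacteristicSolution f w) (hf : Continuous f) (hmono : Monotone f)
    (ht : 0 ≤ t) (x : ℝ) : w t x ∈ range f := by
  obtain ⟨y, rfl⟩ := exists_add_mul_eq hf hmono ht x
  exact ⟨y, (hw t ht y).symm⟩

theorem contDiffOn {n : WithTop ℕ∞} (hw : IsCharacteristicSolution f w) (hn : n ≠ 0)
    (hf : ContDiff ℝ n f) (hmono : Monotone f) :
    ContDiffOn ℝ n (fun q : ℝ × ℝ => w q.1 q.2) (Ici 0 ×ˢ univ) := by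
  rintro ⟨t, x⟩ ⟨ht : 0 ≤ t, -⟩
  obtain ⟨y, rfl⟩ := exists_add_mul_eq hf.continuous hmono ht x
  set Φ : ℝ × ℝ → ℝ × ℝ := fun q => (q.1, q.2 + q.1 * f q.2)
  obtain ⟨E, hE⟩ :=
    exists_hasFDerivAt_characteristicMap_equiv (hf.differentiable hn) hmono ht y
  have hΦ : ContDiffAt ℝ n Φ (t, y) := by fun_prop
  set Ψ := hΦ.localInverse hE hn
  have hΨ : ContDiffAt ℝ n Ψ (Φ (t, y)) := hΦ.to_localInverse hE hn
  have hright : ∀ᶠ q in nhds (Φ (t, y)), Φ (Ψ q) = q :=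
    (hΦ.hasStrictFDerivAt' hE hn).eventually_right_inverse
  have heq : ∀ q : ℝ × ℝ, 0 ≤ q.1 → Φ (Ψ q) = q → w q.1 q.2 = f (Ψ q).2 := by
    intro q hq hΨq
    rw [← hΨq] at hq
    conv_lhs => rw [← hΨq]
    exact hw _ hq _
  have hfΨ : ContDiffAt ℝ n (fun q => f (Ψ q).2) (Φ (t, y)) := by fun_prop
  refine hfΨ.contDiffWithinAt.congr_of_eventuallyEq ?_ (heq _ ht hright.self_of_nhds)
  filter_upwards [self_mem_nhdsWithin, nhdsWithin_le_nhds hright] with q hq hΨq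
  exact heq q hq.1 hΨq

theorem hasDerivAt_space (hw : IsCharacteristicSolution f w) (hf : ContDiff ℝ 1 f)
    (hmono : Monotone f) (ht : 0 ≤ t) (y : ℝ) :
    HasDerivAt (w t) (deriv f y / (1 + t * deriv f y)) (y + t * f y) := by
  have hslice : DifferentiableAt ℝ (w t) (y + t * f y) := by
    have hdiff := (hw.contDiffOn one_ne_zero hf hmono).differentiableOn one_ne_zero
    have hcurve : DifferentiableOn ℝ (fun x : ℝ => (t, x)) univ := by fun_prop
    exact (hdiff.comp hcurve fun x _ => ⟨ht, mem_univ x⟩).differentiableAt Filter.univ_mem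
  have hfy := (hf.differentiable one_ne_zero y).hasDerivAt
  have hchain : HasDerivAt f (deriv (w t) (y + t * f y) * (1 + t * deriv f y)) y := by
    have := hslice.hasDerivAt.comp y ((hasDerivAt_id y).add (hfy.const_mul t))
    rwa [show w t ∘ (id + fun z => t * f z) = f from funext (hw t ht)] at this
  refine hslice.hasDerivAt.congr_deriv ?_
  exact (eq_div_iff (one_add_mul_deriv_pos hmono ht y).ne').2 (hfy.unique hchain).symm

theorem hasDerivWithinAt_time (hw : IsCharacteristicSolution f w) (hf : ContDiff ℝ 1 f)
    (hmono : Monotone f) (ht : 0 ≤ t) (x : ℝ) :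
    HasDerivWithinAt (fun s => w s x) (-w t x * deriv (w t) x) (Ici 0) t := by
  obtain ⟨y, rfl⟩ := exists_add_mul_eq hf.continuous hmono ht x
  obtain ⟨L, hL⟩ := (hw.contDiffOn one_ne_zero hf hmono).differentiableOn one_ne_zero
    (t, y + t * f y) ⟨ht, mem_univ _⟩
  have htime : HasDerivWithinAt (fun s => w s (y + t * f y)) (L (1, 0)) (Ici 0) t := by
    have hcurve : HasDerivWithinAt (fun s : ℝ => (s, y + t * f y)) (1, 0) (Ici 0) t :=
      (hasDerivWithinAt_id t _).prodMk (hasDerivWithinAt_const t _ _)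
    exact hL.comp_hasDerivWithinAt t hcurve fun s hs => mk_mem_prod hs (mem_univ _)
  have hspace : L (0, 1) = deriv (w t) (y + t * f y) := by
    have hcurve : HasDerivWithinAt (fun x : ℝ => (t, x)) (0, 1) univ (y + t * f y) :=
      (hasDerivWithinAt_const _ _ t).prodMk (hasDerivWithinAt_id _ _)
    have := hL.comp_hasDerivWithinAt (y + t * f y) hcurve fun x _ => mk_mem_prod ht (mem_univ x)
    exact (hasDerivWithinAt_univ.1 this).deriv.symm
  have hline : L (1, f y) = 0 := by
    have hray : HasDerivWithinAt (fun s => (s, y + s * f y)) (1, f y) (Ici 0) t := by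
      simpa using (hasDerivWithinAt_id t _).prodMk
        (((hasDerivWithinAt_id t _).mul_const (f y)).const_add y)
    have hderiv := hL.comp_hasDerivWithinAt t hray fun s hs => mk_mem_prod hs (mem_univ _)
    have hconst : HasDerivWithinAt (fun _ => f y) (L (1, f y)) (Ici 0) t :=
      hderiv.congr (fun s hs => (hw s hs y).symm) (hw t ht y).symm
    exact (uniqueDiffOn_Ici 0 t ht).eq_deriv _ hconst (hasDerivWithinAt_const t _ _)
  refine htime.congr_deriv ?_
  calc L (1, 0) = L ((1, f y) - f y • (0, 1)) := by simp
    _ = -w t (y + t * f y) * deriv (w t) (y + t * f y) := by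
        rw [map_sub, map_smul, hline, hspace, hw t ht, smul_eq_mul, zero_sub, neg_mul]

end IsCharacteristicSolution

/-! ### The differential algebra of mixed derivatives -/

section MixedDerivatives

variable (g : Polynomial ℝ)

/-- `g(w)` in the polynomial ring in `X 0 = w` and `X 1 = R`, where `R = (1 + t g(w))⁻¹` is the
inverse Jacobian of the characteristic flow. -/
noncomputable def rate : MvPolynomial (Fin 2) ℝ := Polynomial.aeval (X 0) g

/-- The action of `∂ₓ` on polynomials in `(w, R)`. In `∂ₓR` the time is eliminated through
`t g(w) R = 1 - R`. -/
noncomputable def spaceDerivation :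
    Derivation ℝ (MvPolynomial (Fin 2) ℝ) (MvPolynomial (Fin 2) ℝ) :=
  mkDerivation ℝ ![rate g * X 1, -(rate g.derivative * X 1 ^ 2 * (1 - X 1))]

/-- The action of the material derivative `∂ₜ + w ∂ₓ` on polynomials in `(w, R)`. -/
noncomputable def materialDerivation :
    Derivation ℝ (MvPolynomial (Fin 2) ℝ) (MvPolynomial (Fin 2) ℝ) :=
  mkDerivation ℝ ![0, -(rate g * X 1 ^ 2)]

/-- The action of `∂ₜ` on polynomials in `(w, R)`. -/
noncomputable def timeDerivation :
    Derivation ℝ (MvPolynomial (Fin 2) ℝ) (MvPolynomial (Fin 2) ℝ) :=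
  materialDerivation g - (X 0 : MvPolynomial (Fin 2) ℝ) • spaceDerivation g

/-- The polynomial in `(w, R)` that represents `∂ₜᵐ ∂ₓⁿ w`. -/
noncomputable def mixedDerivative (m n : ℕ) : MvPolynomial (Fin 2) ℝ :=
  (timeDerivation g)^[m] ((spaceDerivation g)^[n] (X 0))

/-- The polynomials in `(w, R)` that gain a factor `(1 + t)⁻¹` both in `L¹` and in `L^∞`. -/
noncomputable def decayIdeal : Ideal (MvPolynomial (Fin 2) ℝ) :=
  Ideal.span {rate g * X 1 ^ 3, rate g ^ 2 * X 1 ^ 2}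

theorem eval_rate (z : Fin 2 → ℝ) : eval z (rate g) = g.eval (z 0) := by
  simp [rate, Polynomial.aeval_def, Polynomial.eval₂_eq_sum_range, Polynomial.eval_eq_sum_range]

theorem spaceDerivation_X_zero : spaceDerivation g (X 0) = rate g * X 1 := by
  simp [spaceDerivation]

theorem spaceDerivation_X_one :
    spaceDerivation g (X 1) = -(rate g.derivative * X 1 ^ 2 * (1 - X 1)) := by
  simp [spaceDerivation]

theorem materialDerivation_X_zero : materialDerivation g (X 0) = 0 := by
  simp [materialDerivation]

theorem materialDerivation_X_one : materialDerivation g (X 1) = -(rate g * X 1 ^ 2) := by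
  simp [materialDerivation]

theorem spaceDerivation_rate :
    spaceDerivation g (rate g) = rate g.derivative * (rate g * X 1) := by
  rw [← spaceDerivation_X_zero, ← smul_eq_mul, rate, rate, Derivation.map_aeval]

theorem materialDerivation_rate : materialDerivation g (rate g) = 0 := by
  rw [rate, Derivation.map_aeval, materialDerivation_X_zero, smul_zero]

theorem mapsTo_spaceDerivation_decayIdeal :
    MapsTo (spaceDerivation g) (decayIdeal g) (decayIdeal g) := by
  intro q hq
  refine derivation_mem_span _ ?_ hq
  simp only [mem_insert_iff, mem_singleton_iff, forall_eq_or_imp, forall_eq, Ideal.mem_span_pair,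
    Derivation.leibniz, Derivation.leibniz_pow, spaceDerivation_rate, spaceDerivation_X_one,
    smul_eq_mul, nsmul_eq_mul]
  exact ⟨⟨rate g.derivative * X 1 * (3 * X 1 - 2), 0, by push_cast; ring⟩,
    ⟨0, 2 * rate g.derivative * X 1 ^ 2, by push_cast; ring⟩⟩

theorem mapsTo_materialDerivation_decayIdeal :
    MapsTo (materialDerivation g) (decayIdeal g) (decayIdeal g) := by
  intro q hq
  refine derivation_mem_span _ ?_ hq
  simp only [mem_insert_iff, mem_singleton_iff, forall_eq_or_imp, forall_eq, Ideal.mem_span_pair,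
    Derivation.leibniz, Derivation.leibniz_pow, materialDerivation_rate, materialDerivation_X_one,
    smul_eq_mul, nsmul_eq_mul]
  exact ⟨⟨-3 * rate g * X 1, 0, by push_cast; ring⟩, ⟨0, -2 * rate g * X 1, by push_cast; ring⟩⟩

theorem mapsTo_timeDerivation_decayIdeal :
    MapsTo (timeDerivation g) (decayIdeal g) (decayIdeal g) := fun _ hq =>
  sub_mem (mapsTo_materialDerivation_decayIdeal g hq)
    (Ideal.mul_mem_left _ _ (mapsTo_spaceDerivation_decayIdeal g hq))

theorem spaceDerivation_rate_mul_X_one_mem_decayIdeal :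
    spaceDerivation g (rate g * X 1) ∈ decayIdeal g := by
  simp only [decayIdeal, Ideal.mem_span_pair, Derivation.leibniz, spaceDerivation_rate,
    spaceDerivation_X_one, smul_eq_mul]
  exact ⟨rate g.derivative, 0, by ring⟩

theorem materialDerivation_rate_mul_X_one :
    materialDerivation g (rate g * X 1) = -(rate g ^ 2 * X 1 ^ 2) := by
  rw [Derivation.leibniz, materialDerivation_rate, materialDerivation_X_one, smul_zero, add_zero,
    smul_eq_mul]
  ring

theorem timeDerivation_rate_mul_X_one_mem_decayIdeal :
    timeDerivation g (rate g * X 1) ∈ decayIdeal g := by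
  refine sub_mem ?_ (Ideal.mul_mem_left _ _ (spaceDerivation_rate_mul_X_one_mem_decayIdeal g))
  rw [Derivation.coeFn_coe, materialDerivation_rate_mul_X_one]
  exact neg_mem (Ideal.subset_span (by simp))

theorem timeDerivation_X_zero : timeDerivation g (X 0) = -(X 0 * (rate g * X 1)) := by
  simp [timeDerivation, materialDerivation_X_zero, spaceDerivation_X_zero]

theorem timeDerivation_X_one : timeDerivation g (X 1) =
    -(rate g * X 1 ^ 2) + X 0 * (rate g.derivative * X 1 ^ 2 * (1 - X 1)) := by
  simp [timeDerivation, materialDerivation_X_one, spaceDerivation_X_one]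

theorem timeDerivation_timeDerivation_X_zero_mem_decayIdeal :
    timeDerivation g (timeDerivation g (X 0)) ∈ decayIdeal g := by
  have hsq : X 0 * (rate g ^ 2 * X 1 ^ 2) ∈ decayIdeal g :=
    Ideal.mul_mem_left _ _ (Ideal.subset_span (by simp))
  have hflux := Ideal.mul_mem_left _ (X 0) (timeDerivation_rate_mul_X_one_mem_decayIdeal g)
  convert sub_mem hsq hflux using 1
  rw [timeDerivation_X_zero, map_neg, Derivation.leibniz, timeDerivation_X_zero, smul_eq_mul,
    smul_eq_mul]
  ring

theorem mixedDerivative_mem_decayIdeal {m n : ℕ} (h : 2 ≤ m + n) :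
    mixedDerivative g m n ∈ decayIdeal g := by
  have htime := mapsTo_timeDerivation_decayIdeal g
  match m, n, h with
  | m + 2, 0, _ => exact htime.iterate m (timeDerivation_timeDerivation_X_zero_mem_decayIdeal g)
  | m + 1, 1, _ =>
    refine htime.iterate m ?_
    simpa [spaceDerivation_X_zero] using timeDerivation_rate_mul_X_one_mem_decayIdeal g
  | m, n + 2, _ =>
    refine htime.iterate m ((mapsTo_spaceDerivation_decayIdeal g).iterate n ?_)
    simpa [spaceDerivation_X_zero] using spaceDerivation_rate_mul_X_one_mem_decayIdeal g

variable (c : ℝ)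

theorem rate_smul : rate (c • g) = c • rate g := map_smul _ _ _

theorem spaceDerivation_smul : spaceDerivation (c • g) = c • spaceDerivation g := by
  ext i : 1
  fin_cases i <;> simp [spaceDerivation, rate_smul]

theorem timeDerivation_smul : timeDerivation (c • g) = c • timeDerivation g := by
  ext i : 1
  fin_cases i <;>
    simp [timeDerivation, spaceDerivation_smul, materialDerivation, rate_smul, smul_sub]

theorem mixedDerivative_smul (m n : ℕ) :
    mixedDerivative (c • g) m n = c ^ (m + n) • mixedDerivative g m n := by
  rw [mixedDerivative, timeDerivation_smul, spaceDerivation_smul, ← one_smul ℝ (X 0),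
    iterate_smul_derivation, iterate_smul_derivation, pow_add, mul_one]
  rfl

end MixedDerivatives

/-! ### Mixed derivatives along a solution -/

/-- The inverse Jacobian `R` of the characteristic flow at time `t`, as a function of the value `v`
carried by the characteristic. -/
noncomputable def compression (h : Polynomial ℝ) (t v : ℝ) : ℝ := (1 + t * h.eval v)⁻¹

/-- The point `(w, R)` at which the polynomials representing derivatives of `w` are evaluated. -/
noncomputable def state (h : Polynomial ℝ) (w : ℝ → ℝ → ℝ) (t x : ℝ) : Fin 2 → ℝ :=
  ![w t x, compression h t (w t x)]

theorem compression_mul_one_add {h : Polynomial ℝ} {t v : ℝ} (ht : 0 ≤ t) (hv : 0 ≤ h.eval v) :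
    compression h t v * (1 + t * h.eval v) = 1 :=
  inv_mul_cancel₀ (by positivity)

theorem compression_mem_Icc {h : Polynomial ℝ} {t v : ℝ} (ht : 0 ≤ t) (hv : 0 ≤ h.eval v) :
    compression h t v ∈ Icc 0 1 :=
  ⟨inv_nonneg.2 (by positivity), inv_le_one_of_one_le₀ (le_add_of_nonneg_right (by positivity))⟩

theorem compression_smul (h : Polynomial ℝ) (a t v : ℝ) :
    compression (a • h) t v = compression h (a * t) v := by
  rw [compression, compression, Polynomial.eval_smul, smul_eq_mul, mul_left_comm, mul_assoc]

theorem hasDerivWithinAt_compression (h : Polynomial ℝ) {τ v : ℝ → ℝ} {τ' v' : ℝ} {S : Set ℝ}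
    {x : ℝ} (hτ : HasDerivWithinAt τ τ' S x) (hv : HasDerivWithinAt v v' S x)
    (hne : 1 + τ x * h.eval (v x) ≠ 0) :
    HasDerivWithinAt (fun s => compression h (τ s) (v s))
      (-(τ' * h.eval (v x) + τ x * (h.derivative.eval (v x) * v')) *
        compression h (τ x) (v x) ^ 2) S x := by
  have hhv : HasDerivWithinAt (fun s => h.eval (v s)) (h.derivative.eval (v x) * v') S x :=
    (h.hasDerivAt (v x)).comp_hasDerivWithinAt x hv
  refine (((hτ.fun_mul hhv).const_add 1).fun_inv hne).congr_deriv ?_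
  rw [compression, inv_pow, div_eq_mul_inv]

namespace IsCharacteristicSolution

variable {f : ℝ → ℝ} {h : Polynomial ℝ} {w : ℝ → ℝ → ℝ} {t : ℝ}

variable (hw : IsCharacteristicSolution f w) (hf : ∀ y, HasDerivAt f (h.eval (f y)) y)
  (hpos : ∀ y, 0 ≤ h.eval (f y))
include hw hf hpos

theorem eval_nonneg (ht : 0 ≤ t) (x : ℝ) : 0 ≤ h.eval (w t x) := by
  obtain ⟨y, hy⟩ := hw.mem_range (contDiff_of_hasDerivAt_polynomial hf).continuous
    (monotone_of_hasDerivAt_nonneg hf hpos) ht x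
  exact hy ▸ hpos y

theorem hasDerivAt_eval_mul_compression (ht : 0 ≤ t) (x : ℝ) :
    HasDerivAt (w t) (h.eval (w t x) * compression h t (w t x)) x := by
  have hcont := contDiff_of_hasDerivAt_polynomial hf
  have hmono := monotone_of_hasDerivAt_nonneg hf hpos
  obtain ⟨y, rfl⟩ := exists_add_mul_eq hcont.continuous hmono ht x
  simpa only [hw t ht y, (hf y).deriv, compression, div_eq_mul_inv] using
    hw.hasDerivAt_space (hcont.of_le (by simp)) hmono ht y

theorem hasDerivAt_state (ht : 0 ≤ t) (x : ℝ) (i : Fin 2) :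
    HasDerivAt (fun x => state h w t x i)
      (eval (state h w t x) (spaceDerivation h (X i))) x := by
  have hspace := hw.hasDerivAt_eval_mul_compression hf hpos ht x
  have hunit := compression_mul_one_add ht (hw.eval_nonneg hf hpos ht x)
  fin_cases i
  · simpa [state, spaceDerivation_X_zero, eval_rate] using hspace
  · rw [← hasDerivWithinAt_univ] at hspace ⊢
    refine (hasDerivWithinAt_compression h (hasDerivWithinAt_const x univ t) hspace
      (right_ne_zero_of_mul_eq_one hunit)).congr_deriv ?_
    simp only [Fin.mk_one, spaceDerivation_X_one, map_neg, map_mul, map_sub, map_pow, map_one,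
      eval_X, eval_rate, state, Matrix.cons_val_zero, Matrix.cons_val_one]
    linear_combination (-h.derivative.eval (w t x) * compression h t (w t x) ^ 2) * hunit

theorem hasDerivWithinAt_state (ht : 0 ≤ t) (x : ℝ) (i : Fin 2) :
    HasDerivWithinAt (fun s => state h w s x i)
      (eval (state h w t x) (timeDerivation h (X i))) (Ici 0) t := by
  have htime := hw.hasDerivWithinAt_time ((contDiff_of_hasDerivAt_polynomial hf).of_le (by simp))
    (monotone_of_hasDerivAt_nonneg hf hpos) ht x
  rw [(hw.hasDerivAt_eval_mul_compression hf hpos ht x).deriv] at htime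
  have hunit := compression_mul_one_add ht (hw.eval_nonneg hf hpos ht x)
  fin_cases i
  · simpa [state, timeDerivation_X_zero, eval_rate] using htime
  · refine (hasDerivWithinAt_compression h (hasDerivWithinAt_id t _) htime
      (right_ne_zero_of_mul_eq_one hunit)).congr_deriv ?_
    simp only [Fin.mk_one, timeDerivation_X_one, map_add, map_neg, map_mul, map_sub, map_pow,
      map_one, eval_X, eval_rate, state, Matrix.cons_val_zero, Matrix.cons_val_one, id]
    linear_combination
      (w t x * h.derivative.eval (w t x) * compression h t (w t x) ^ 2) * hunit

theorem iteratedDerivWithin_iteratedDeriv_eq_eval_mixedDerivative (ht : 0 ≤ t) (x : ℝ)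
    (m n : ℕ) :
    iteratedDerivWithin m (fun s => iteratedDeriv n (w s) x) (Ici 0) t =
      eval (state h w t x) (mixedDerivative h m n) := by
  have hspace : EqOn (fun s => iteratedDeriv n (w s) x)
      (fun s => eval (state h w s x) ((spaceDerivation h)^[n] (X 0))) (Ici 0) := by
    intro s hs
    simpa [iteratedDerivWithin_univ, state] using
      iteratedDerivWithin_eval (spaceDerivation h) uniqueDiffOn_univ
        (fun x _ i => (hw.hasDerivAt_state hf hpos hs x i).hasDerivWithinAt) (X 0) n (mem_univ x)
  rw [iteratedDerivWithin_congr hspace ht]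
  exact iteratedDerivWithin_eval (timeDerivation h) (uniqueDiffOn_Ici 0)
    (fun s hs => hw.hasDerivWithinAt_state hf hpos hs x) _ m ht

end IsCharacteristicSolution

/-! ### Decay for concave profiles -/

/-- A bounded monotone profile solving the autonomous equation `F' = g(F)` with a polynomial `g`
that is nonnegative and concave on the interval `[m, M]` in which `F` takes its values. -/
structure IsConcaveProfile (g : Polynomial ℝ) (m M : ℝ) (F : ℝ → ℝ) : Prop where
  hasDerivAt : ∀ x, HasDerivAt F (g.eval (F x)) x
  mem_Icc : ∀ x, F x ∈ Icc m M
  nonneg : ∀ v ∈ Icc m M, 0 ≤ g.eval v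
  concaveOn : ConcaveOn ℝ (Icc m M) g.eval

/-- The `x`-derivative of `w + (w - c) R` along a solution with value `v`. It controls `L¹` norms,
as the function differentiated is bounded uniformly in time. -/
noncomputable def controlDensity (h : Polynomial ℝ) (c t v : ℝ) : ℝ :=
  h.eval v * compression h t v + h.eval v * compression h t v ^ 3 *
    (1 + t * (h.eval v + h.derivative.eval v * (c - v)))

/-- The sum of the generators of `decayIdeal` at the value `v` and time `τ`. -/
noncomputable def decayMajorant (g : Polynomial ℝ) (τ v : ℝ) : ℝ :=
  g.eval v * compression g τ v ^ 3 + g.eval v ^ 2 * compression g τ v ^ 2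

theorem controlDensity_smul (h : Polynomial ℝ) (a c t v : ℝ) :
    controlDensity (a • h) c t v = a * controlDensity h c (a * t) v := by
  simp only [controlDensity, compression_smul, Polynomial.derivative_smul, Polynomial.eval_smul,
    smul_eq_mul]
  ring

namespace IsConcaveProfile

variable {g : Polynomial ℝ} {m M : ℝ} {F : ℝ → ℝ}

theorem comp_div (hF : IsConcaveProfile g m M F) {σ : ℝ} (hσ : 0 < σ) :
    IsConcaveProfile (σ⁻¹ • g) m M (fun x => F (x / σ)) where
  hasDerivAt x := by
    refine ((hF.hasDerivAt (x / σ)).comp x ((hasDerivAt_id x).div_const σ)).congr_deriv ?_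
    rw [Polynomial.eval_smul, smul_eq_mul, one_div, mul_comm]
  mem_Icc x := hF.mem_Icc (x / σ)
  nonneg v hv := by
    simpa using mul_nonneg (inv_nonneg.2 hσ.le) (hF.nonneg v hv)
  concaveOn := by
    simpa only [Polynomial.eval_smul] using hF.concaveOn.smul (inv_nonneg.2 hσ.le)

theorem eval_comp_nonneg (hF : IsConcaveProfile g m M F) (x : ℝ) : 0 ≤ g.eval (F x) :=
  hF.nonneg _ (hF.mem_Icc x)

theorem contDiff (hF : IsConcaveProfile g m M F) : ContDiff ℝ (⊤ : ℕ∞) F :=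
  contDiff_of_hasDerivAt_polynomial hF.hasDerivAt

theorem monotone (hF : IsConcaveProfile g m M F) : Monotone F :=
  monotone_of_hasDerivAt_nonneg hF.hasDerivAt hF.eval_comp_nonneg

theorem solution_mem_Icc (hF : IsConcaveProfile g m M F) {w : ℝ → ℝ → ℝ}
    (hw : IsCharacteristicSolution F w) {t : ℝ} (ht : 0 ≤ t) (x : ℝ) : w t x ∈ Icc m M := by
  obtain ⟨y, hy⟩ := hw.mem_range hF.contDiff.continuous hF.monotone ht x
  exact hy ▸ hF.mem_Icc y

theorem eval_le_add_mul (hF : IsConcaveProfile g m M F) {v c : ℝ} (hv : v ∈ Icc m M)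
    (hc : c ∈ Icc m M) : g.eval c ≤ g.eval v + g.derivative.eval v * (c - v) :=
  le_add_mul_of_concaveOn hF.concaveOn hv hc (g.hasDerivAt v)

theorem controlDensity_nonneg (hF : IsConcaveProfile g m M F) {c t v : ℝ} (hc : c ∈ Icc m M)
    (ht : 0 ≤ t) (hv : v ∈ Icc m M) : 0 ≤ controlDensity g c t v := by
  have hγ := hF.nonneg v hv
  have hR := (compression_mem_Icc ht hγ).1
  have htangent := (hF.nonneg c hc).trans (hF.eval_le_add_mul hv hc)
  unfold controlDensity
  positivity

variable {c τ v : ℝ}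

theorem eval_mul_compression_le (hF : IsConcaveProfile g m M F) (hv : v ∈ Icc m M)
    (hvc : g.eval v ≤ g.eval c) (hτ : 0 ≤ τ) :
    g.eval v * compression g τ v ≤ (1 + g.eval c) * (1 + τ)⁻¹ := by
  have hγ := hF.nonneg v hv
  have : 0 ≤ g.eval c := hγ.trans hvc
  rw [compression, ← div_eq_mul_inv, ← div_eq_mul_inv,
    div_le_div_iff₀ (by positivity) (by positivity)]
  calc g.eval v * (1 + τ) = g.eval v + τ * g.eval v := by ring
    _ ≤ (1 + g.eval c) + (1 + g.eval c) * (τ * g.eval v) :=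
        add_le_add (by linarith) (le_mul_of_one_le_left (by positivity) (by linarith))
    _ = (1 + g.eval c) * (1 + τ * g.eval v) := by ring

theorem one_add_le_mul_one_add (hF : IsConcaveProfile g m M F) (hv : v ∈ Icc m M)
    (hc : c ∈ Icc m M) (hpos : 0 < g.eval c) (hτ : 0 ≤ τ) :
    1 + τ ≤ (1 + (g.eval c)⁻¹) * (1 + τ * (g.eval v + g.derivative.eval v * (c - v))) := by
  have htangent := hF.eval_le_add_mul hv hc
  calc 1 + τ ≤ 1 + τ + ((g.eval c)⁻¹ + τ * g.eval c) := le_add_of_nonneg_right (by positivity)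
    _ = (1 + (g.eval c)⁻¹) * (1 + τ * g.eval c) := by field_simp; ring
    _ ≤ _ := by gcongr

theorem decayMajorant_le (hF : IsConcaveProfile g m M F) (hv : v ∈ Icc m M)
    (hvc : g.eval v ≤ g.eval c) (hτ : 0 ≤ τ) :
    decayMajorant g τ v ≤ (1 + g.eval c) ^ 2 * (1 + τ)⁻¹ := by
  have hγ := hF.nonneg v hv
  have hδ := hγ.trans hvc
  obtain ⟨hR, hR_le⟩ := compression_mem_Icc hτ hγ
  have hflux := hF.eval_mul_compression_le hv hvc hτ
  calc decayMajorant g τ v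
      = g.eval v * compression g τ v * (compression g τ v ^ 2 + g.eval v * compression g τ v) := by
        rw [decayMajorant]; ring
    _ ≤ (1 + g.eval c) * (1 + τ)⁻¹ * (1 ^ 2 + g.eval c * 1) := by gcongr
    _ = (1 + g.eval c) ^ 2 * (1 + τ)⁻¹ := by ring

theorem decayMajorant_le_mul_controlDensity (hF : IsConcaveProfile g m M F) (hv : v ∈ Icc m M)
    (hc : c ∈ Icc m M) (hvc : g.eval v ≤ g.eval c) (hτ : 0 ≤ τ) :
    decayMajorant g τ v ≤
      (1 + g.eval c + (g.eval c)⁻¹) * (1 + τ)⁻¹ * controlDensity g c τ v := by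
  have hγ := hF.nonneg v hv
  rcases hγ.eq_or_lt with hzero | hpos
  · simp [decayMajorant, controlDensity, ← hzero]
  have hδ := hpos.trans_le hvc
  have hgrowth := hF.one_add_le_mul_one_add hv hc hδ hτ
  have hflux := hF.eval_mul_compression_le hv hvc hτ
  have hR := (compression_mem_Icc hτ hγ).1
  have htangent := hδ.le.trans (hF.eval_le_add_mul hv hc)
  unfold decayMajorant controlDensity
  set G := 1 + τ * (g.eval v + g.derivative.eval v * (c - v))
  set R := compression g τ v
  set A := 1 + g.eval c + (g.eval c)⁻¹
  have hA : 1 + g.eval c ≤ A := le_add_of_nonneg_right (by positivity)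
  have hA' : 1 + (g.eval c)⁻¹ ≤ A := by linarith
  have : 0 ≤ G := by positivity
  calc g.eval v * R ^ 3 + g.eval v ^ 2 * R ^ 2
      = (1 + τ) * (1 + τ)⁻¹ * (g.eval v * R ^ 3) + g.eval v * R * (g.eval v * R) := by
        rw [mul_inv_cancel₀ (by positivity)]; ring
    _ ≤ (1 + (g.eval c)⁻¹) * G * (1 + τ)⁻¹ * (g.eval v * R ^ 3) +
          (1 + g.eval c) * (1 + τ)⁻¹ * (g.eval v * R) := by gcongr
    _ = (1 + (g.eval c)⁻¹) * (1 + τ)⁻¹ * (g.eval v * R ^ 3 * G) +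
          (1 + g.eval c) * (1 + τ)⁻¹ * (g.eval v * R) := by ring
    _ ≤ A * (1 + τ)⁻¹ * (g.eval v * R ^ 3 * G) + A * (1 + τ)⁻¹ * (g.eval v * R) := by gcongr
    _ = A * (1 + τ)⁻¹ * (g.eval v * R + g.eval v * R ^ 3 * G) := by ring

theorem eventually_abs_eval_le (hF : IsConcaveProfile g m M F) (hc : c ∈ Icc m M)
    (hmax : IsMaxOn g.eval (Icc m M) c) {q : MvPolynomial (Fin 2) ℝ} (hq : q ∈ decayIdeal g) :
    ∀ᶠ K : ℝ in Filter.atTop, ∀ v ∈ Icc m M, ∀ τ, 0 ≤ τ →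
      |eval ![v, compression g τ v] q| ≤ K * (1 + τ)⁻¹ * min 1 (controlDensity g c τ v) := by
  obtain ⟨L, hL⟩ := exists_abs_eval_le_of_mem_span_pair
    (isCompact_Icc : IsCompact (Icc ![m, 0] ![M, 1])) hq
  set A := (1 + g.eval c) ^ 2 + (g.eval c)⁻¹
  have hδ := hF.nonneg c hc
  filter_upwards [Filter.eventually_ge_atTop (|L| * A)] with K hK v hv τ hτ
  have hvc : g.eval v ≤ g.eval c := hmax hv
  have hγ := hF.nonneg v hv
  obtain ⟨hR, hR_le⟩ := compression_mem_Icc hτ hγ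
  have hdens := hF.controlDensity_nonneg hc hτ hv
  have hmajorant_nonneg : 0 ≤ decayMajorant g τ v := by
    unfold decayMajorant
    positivity
  have hmajorant : decayMajorant g τ v ≤
      A * (1 + τ)⁻¹ * min 1 (controlDensity g c τ v) := by
    rw [mul_min_of_nonneg _ _ (by positivity), mul_one]
    refine le_min ((hF.decayMajorant_le hv hvc hτ).trans ?_)
      ((hF.decayMajorant_le_mul_controlDensity hv hc hvc hτ).trans ?_)
    · gcongr
      exact le_add_of_nonneg_right (by positivity)
    · gcongr
      exact add_le_add (le_self_pow₀ (le_add_of_nonneg_right hδ) two_ne_zero) le_rfl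
  have hbox : ![v, compression g τ v] ∈ Icc ![m, 0] ![M, 1] := by
    simp [Pi.le_def, hv.1, hv.2, hR, hR_le]
  calc |eval ![v, compression g τ v] q|
      ≤ L * decayMajorant g τ v := by
        simpa [decayMajorant, eval_rate, abs_of_nonneg, hγ, hR] using hL _ hbox
    _ ≤ |L| * (A * (1 + τ)⁻¹ * min 1 (controlDensity g c τ v)) := by
        gcongr
        exact le_abs_self L
    _ = |L| * A * (1 + τ)⁻¹ * min 1 (controlDensity g c τ v) := by ring
    _ ≤ K * (1 + τ)⁻¹ * min 1 (controlDensity g c τ v) := by gcongr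

theorem exists_abs_eval_mixedDerivative_le (hF : IsConcaveProfile g m M F) {k : ℕ} (hk : 2 ≤ k) :
    ∃ c ∈ Icc m M, ∃ K : ℝ, 0 < K ∧ ∀ i j : ℕ, i + j = k → ∀ v ∈ Icc m M, ∀ τ, 0 ≤ τ →
      |eval ![v, compression g τ v] (mixedDerivative g i j)| ≤
        K * (1 + τ)⁻¹ * min 1 (controlDensity g c τ v) := by
  obtain ⟨c, hc, hmax⟩ := isCompact_Icc.exists_isMaxOn ⟨F 0, hF.mem_Icc 0⟩
    g.continuous.continuousOn
  have hbounds := (Filter.eventually_all_finset (Finset.HasAntidiagonal.antidiagonal k)).2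
    fun ij hij => hF.eventually_abs_eval_le hc hmax <| mixedDerivative_mem_decayIdeal g <|
      hk.trans_eq (Finset.HasAntidiagonal.mem_antidiagonal.1 hij).symm
  obtain ⟨K, hK, hKpos⟩ := (hbounds.and (Filter.eventually_gt_atTop 0)).exists
  exact ⟨c, hc, K, hKpos, fun i j hij => hK (i, j) (Finset.HasAntidiagonal.mem_antidiagonal.2 hij)⟩

end IsConcaveProfile

theorem lintegral_controlDensity_le {h : Polynomial ℝ} {m M c : ℝ} {f : ℝ → ℝ}
    (hf : IsConcaveProfile h m M f) {w : ℝ → ℝ → ℝ} (hw : IsCharacteristicSolution f w)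
    (hc : c ∈ Icc m M) {t : ℝ} (ht : 0 ≤ t) :
    ∫⁻ x, ENNReal.ofReal (controlDensity h c t (w t x)) ≤ ENNReal.ofReal (3 * (M - m)) := by
  have hmem := hf.solution_mem_Icc hw ht
  have hderiv (x : ℝ) : HasDerivAt (fun x => w t x + (w t x - c) * compression h t (w t x))
      (controlDensity h c t (w t x)) x := by
    have hspace := hw.hasDerivAt_state hf.hasDerivAt hf.eval_comp_nonneg ht x 0
    have hcomp := hw.hasDerivAt_state hf.hasDerivAt hf.eval_comp_nonneg ht x 1
    simp only [spaceDerivation_X_zero, spaceDerivation_X_one, map_neg, map_mul, map_sub, map_pow,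
      map_one, eval_X, eval_rate, state, Matrix.cons_val_zero, Matrix.cons_val_one] at hspace hcomp
    refine (hspace.fun_add ((hspace.sub_const c).fun_mul hcomp)).congr_deriv ?_
    have hunit := compression_mul_one_add ht (hf.nonneg _ (hmem x))
    rw [controlDensity]
    linear_combination (-h.eval (w t x) * compression h t (w t x) ^ 2 +
      (w t x - c) * h.derivative.eval (w t x) * compression h t (w t x) ^ 2) * hunit
  refine (lintegral_deriv_le_of_mem_Icc (l := m - (M - m)) (u := M + (M - m)) hderiv
    (fun x => hf.controlDensity_nonneg hc ht (hmem x)) fun x => ?_).trans_eq (by ring_nf)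
  obtain ⟨hR, hR_le⟩ := compression_mem_Icc ht (hf.nonneg _ (hmem x))
  have hshift : |(w t x - c) * compression h t (w t x)| ≤ M - m := by
    rw [abs_mul, abs_of_nonneg hR]
    exact (mul_le_of_le_one_right (abs_nonneg _) hR_le).trans
      (abs_sub_le_of_le_of_le (hmem x).1 (hmem x).2 hc.1 hc.2)
  have := abs_le.1 hshift
  exact ⟨by linarith [(hmem x).1], by linarith [(hmem x).2]⟩

theorem abs_iteratedDerivWithin_iteratedDeriv_le {g : Polynomial ℝ} {m M : ℝ} {F : ℝ → ℝ}
    (hF : IsConcaveProfile g m M F) {i j : ℕ} {c K : ℝ} (hK : ∀ v ∈ Icc m M, ∀ τ, 0 ≤ τ →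
      |eval ![v, compression g τ v] (mixedDerivative g i j)| ≤
        K * (1 + τ)⁻¹ * min 1 (controlDensity g c τ v))
    {σ : ℝ} (hσ : 0 < σ) {w : ℝ → ℝ → ℝ} (hw : IsCharacteristicSolution (fun x => F (x / σ)) w)
    {t : ℝ} (ht : 0 ≤ t) (x : ℝ) :
    |iteratedDerivWithin i (fun s => iteratedDeriv j (w s) x) (Ici 0) t| ≤
      K * (σ + t)⁻¹ * σ * σ⁻¹ ^ (i + j) *
        min 1 (σ * controlDensity (σ⁻¹ • g) c t (w t x)) := by
  have hf := hF.comp_div hσ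
  rw [hw.iteratedDerivWithin_iteratedDeriv_eq_eval_mixedDerivative hf.hasDerivAt
    hf.eval_comp_nonneg ht, mixedDerivative_smul, state, compression_smul,
    smul_eval, abs_mul, abs_of_nonneg (by positivity), controlDensity_smul,
    mul_inv_cancel_left₀ hσ.ne']
  calc σ⁻¹ ^ (i + j) *
        |eval ![w t x, compression g (σ⁻¹ * t) (w t x)] (mixedDerivative g i j)|
      ≤ σ⁻¹ ^ (i + j) * (K * (1 + σ⁻¹ * t)⁻¹ * min 1 (controlDensity g c (σ⁻¹ * t) (w t x))) := by
        gcongr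
        exact hK _ (hf.solution_mem_Icc hw ht x) _ (by positivity)
    _ = _ := by
        rw [show 1 + σ⁻¹ * t = σ⁻¹ * (σ + t) by field_simp, mul_inv, inv_inv]
        ring

theorem hasDerivAt_tanh (x : ℝ) : HasDerivAt Real.tanh (1 - Real.tanh x ^ 2) x := by
  have hcosh := (Real.cosh_pos x).ne'
  have h := (Real.hasDerivAt_sinh x).div (Real.hasDerivAt_cosh x) hcosh
  rw [show Real.tanh = Real.sinh / Real.cosh from funext Real.tanh_eq_sinh_div_cosh]
  refine h.congr_deriv ?_
  simp only [Pi.div_apply]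
  field_simp

theorem isConcaveProfile_tanh {wm wp : ℝ} (hw : wm < wp) :
    IsConcaveProfile
      (Polynomial.C (2 / (wp - wm)) * ((Polynomial.C wp - Polynomial.X) *
        (Polynomial.X - Polynomial.C wm))) wm wp
      (fun z => (wp + wm) / 2 + (wp - wm) / 2 * Real.tanh z) where
  hasDerivAt z := by
    have hne : wp - wm ≠ 0 := (sub_pos.2 hw).ne'
    refine (((hasDerivAt_tanh z).const_mul _).const_add _).congr_deriv ?_
    simp only [Polynomial.eval_mul, Polynomial.eval_sub, Polynomial.eval_C, Polynomial.eval_X]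
    field_simp
    ring
  mem_Icc z := by
    obtain ⟨hlow, hupp⟩ := abs_lt.1 (Real.abs_tanh_lt_one z)
    have hhalf : 0 < (wp - wm) / 2 := half_pos (sub_pos.2 hw)
    have := mul_lt_mul_of_pos_left hlow hhalf
    have := mul_lt_mul_of_pos_left hupp hhalf
    constructor <;> linarith
  nonneg v hv := by
    have := sub_pos.2 hw
    have := sub_nonneg.2 hv.1
    have := sub_nonneg.2 hv.2
    simp only [Polynomial.eval_mul, Polynomial.eval_sub, Polynomial.eval_C, Polynomial.eval_X]
    positivity
  concaveOn := by
    refine ⟨convex_Icc _ _, fun x _ y _ a b ha hb hab => ?_⟩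
    have hgap : 0 ≤ 2 / (wp - wm) * (a * b * (x - y) ^ 2) := by
      have := sub_pos.2 hw
      positivity
    obtain rfl := eq_sub_of_add_eq' hab
    simp only [Polynomial.eval_mul, Polynomial.eval_sub, Polynomial.eval_C, Polynomial.eval_X,
      smul_eq_mul]
    linarith

end Burgers

theorem burgers_characteristic_solution_higher_derivative_Lp_bound_general {g : Polynomial ℝ}
    {m M : ℝ} {F : ℝ → ℝ} (hF : Burgers.IsConcaveProfile g m M F) {k : ℕ} (hk : 2 ≤ k) :
    ∃ C : ℝ, 0 < C ∧ ∀ p : ℝ≥0∞, 1 ≤ p → ∀ α₀ α₁ : ℕ, α₀ + α₁ = k → ∀ σ : ℝ, 0 < σ →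
      ∀ w : ℝ → ℝ → ℝ, Burgers.IsCharacteristicSolution (fun x => F (x / σ)) w →
        ContDiffOn ℝ (⊤ : ℕ∞) (fun q : ℝ × ℝ => w q.1 q.2) (Ici 0 ×ˢ univ) ∧
        ∀ t : ℝ, 0 ≤ t →
          eLpNorm
              (fun x => iteratedDerivWithin α₀ (fun s => iteratedDeriv α₁ (w s) x) (Ici 0) t)
              p volume ≤
            ENNReal.ofReal (C * (σ + t)⁻¹ * σ ^ (-(k : ℝ) + 1 + (1 / p).toReal)) := by
  obtain ⟨c, hc, K, hK, hbound⟩ := hF.exists_abs_eval_mixedDerivative_le hk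
  have hmM : 0 ≤ M - m := sub_nonneg.2 ((hF.mem_Icc 0).1.trans (hF.mem_Icc 0).2)
  refine ⟨K * (1 + 3 * (M - m)), by positivity, fun p hp i j hij σ hσ w hw => ?_⟩
  have hf := hF.comp_div hσ
  refine ⟨hw.contDiffOn (by simp) hf.contDiff hf.monotone, fun t ht => ?_⟩
  have hp_inv : (1 / p).toReal ≤ 1 := by
    simpa using ENNReal.toReal_mono ENNReal.one_ne_top (ENNReal.inv_le_one.2 hp)
  have hscaling := Burgers.mul_inv_pow_mul_mul_rpow_le hσ (mul_nonneg zero_le_three hmM)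
    ENNReal.toReal_nonneg hp_inv k
  refine (Burgers.eLpNorm_le_of_abs_le_mul_min hp (by positivity) hσ.le (by positivity)
    (Burgers.abs_iteratedDerivWithin_iteratedDeriv_le hF (hbound i j hij) hσ hw ht)
    (Burgers.lintegral_controlDensity_le hf hw hc ht)).trans (ENNReal.ofReal_le_ofReal ?_)
  calc K * (σ + t)⁻¹ * σ * σ⁻¹ ^ (i + j) * (σ * (3 * (M - m))) ^ (1 / p).toReal
      = K * (σ + t)⁻¹ * (σ * σ⁻¹ ^ k * (σ * (3 * (M - m))) ^ (1 / p).toReal) := by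
        rw [hij]; ring
    _ ≤ K * (σ + t)⁻¹ * ((1 + 3 * (M - m)) * σ ^ (-(k : ℝ) + 1 + (1 / p).toReal)) := by gcongr
    _ = _ := by ring

theorem burgers_characteristic_solution_higher_derivative_Lp_bound
    (wm wp : ℝ) (hw : wm < wp) (k : ℕ) (hk : 2 ≤ k) (p : ℝ≥0∞) (hp : 1 ≤ p) :
    ∃ C : ℝ, 0 < C ∧ ∀ α₀ α₁ : ℕ, α₀ + α₁ = k → ∀ σ : ℝ, 0 < σ → ∀ w : ℝ → ℝ → ℝ,
      -- `w` is the characteristic solution of Burgers' equation with data `w_σ`: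
      (∀ t : ℝ, 0 ≤ t → ∀ y : ℝ,
        w t (y + t * smoothedRiemannData wm wp σ y) = smoothedRiemannData wm wp σ y) →
      -- `w` is infinitely differentiable on [0,∞) × ℝ
      ContDiffOn ℝ (⊤ : ℕ∞) (fun q : ℝ × ℝ => w q.1 q.2) (Set.Ici 0 ×ˢ Set.univ) ∧
      -- and its mixed derivatives ∂ₜ^{α₀}∂ₓ^{α₁} w satisfy the L^p bounds
      (∀ t : ℝ, 0 ≤ t →
        eLpNorm
            (fun x =>
              (fun F => derivWithin F (Set.Ici (0 : ℝ)))^[α₀]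
                (fun s => deriv^[α₁] (fun x' => w s x') x) t)
            p volume
          ≤ ENNReal.ofReal (C * (σ + t)⁻¹ * σ ^ (-(k : ℝ) + 1 + (1 / p).toReal))) := by
  obtain ⟨C, hC, hbound⟩ :=
    burgers_characteristic_solution_higher_derivative_Lp_bound_general
      (Burgers.isConcaveProfile_tanh hw) hk
  refine ⟨C, hC, fun i j hij σ hσ w hchar => ?_⟩
  simpa only [iteratedDerivWithin_eq_iterate, iteratedDeriv_eq_iterate] using
    hbound p hp i j hij σ hσ w hchar
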